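/- Let (X,d) be an unbounded metric space with asdim(X,d) ≤ n. Then there exists a metric d_h on X, coarsely equivalent to d, such that: (i) the Nagata-Assouad dimension of (X,d_h) is at most n; (ii) for every basepoint x₀ ∈ X, defining the Gromov product (x|y) = ½(d_h(x,x₀) + d_h(y,x₀) − d_h(x,y)), one has (x|z) ≥ min((x|y),(y|z)) − 4 for all x, y, z ∈ X; and (iii) for any two sequences (x_i) and (y_i) in X such that (x_m|x_k) → ∞ as m,k → ∞ and (y_m|y_k) → ∞ as m,k → ∞, one has (x_m|y_m) → ∞ as m → ∞ (i.e. the Gromov boundary of (X,d_h) is a single point). -/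

import Mathlib

/-- `d` is a metric on `X`. -/
structure IsMetricOn {X : Type*} (d : X → X → ℝ) : Prop where
  refl : ∀ x, d x x = 0
  eq_of_eq_zero : ∀ x y, d x y = 0 → x = y
  symm : ∀ x y, d x y = d y x
  triangle : ∀ x y z, d x z ≤ d x y + d y z

/-- Nagata-Assouad dimension at most `n` for the distance function `d` on `X`. -/
def NagataDimWithLE {X : Type*} (d : X → X → ℝ) (n : ℕ) : Prop :=
  ∃ C : ℝ, 0 < C ∧ ∀ r : ℝ, 0 < r →
    ∃ U : Fin (n + 1) → Set (Set X),
      (∀ x : X, ∃ i, ∃ V ∈ U i, x ∈ V) ∧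
      (∀ i, ∀ V ∈ U i, ∀ W ∈ U i, V ≠ W → ∀ x ∈ V, ∀ y ∈ W, r < d x y) ∧
      (∀ i, ∀ V ∈ U i, ∀ x ∈ V, ∀ y ∈ V, d x y ≤ C * r)

/-- Asymptotic dimension at most `n` for the distance function `d` on `X`. -/
def AsdimWithLE {X : Type*} (d : X → X → ℝ) (n : ℕ) : Prop :=
  ∀ r : ℝ, 0 < r → ∃ D : ℝ, 0 < D ∧
    ∃ U : Fin (n + 1) → Set (Set X),
      (∀ x : X, ∃ i, ∃ V ∈ U i, x ∈ V) ∧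
      (∀ i, ∀ V ∈ U i, ∀ W ∈ U i, V ≠ W → ∀ x ∈ V, ∀ y ∈ W, r < d x y) ∧
      (∀ i, ∀ V ∈ U i, ∀ x ∈ V, ∀ y ∈ V, d x y ≤ D)

/-- Two distance functions on `X` are coarsely equivalent. -/
def CoarselyEquivalent {X : Type*} (d d' : X → X → ℝ) : Prop :=
  ∃ ρ₁ ρ₂ : ℝ → ℝ, Monotone ρ₁ ∧ Monotone ρ₂ ∧
    Filter.Tendsto ρ₁ Filter.atTop Filter.atTop ∧
    ∀ x y : X, ρ₁ (d x y) ≤ d' x y ∧ d' x y ≤ ρ₂ (d x y)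

/-- The Gromov product `(x|y)` with respect to the basepoint `x₀` and distance `d`. -/
noncomputable def gromovProd {X : Type*} (d : X → X → ℝ) (x₀ x y : X) : ℝ :=
  (d x x₀ + d y x₀ - d x y) / 2

/-!
Apply the hypothesis along rapidly growing scales `g 0 < g 1 < ⋯`, chosen so that `X` has
`g k`-disjoint covers with members of diameter at most `g (k + 1)`, and measure the distance of two
points by the index of the first scale that is at least as large. Controlling covers then costs only
one step of the new metric, so its control function is linear. Since moreover `2 * g k ≤ g (k + 1)`,
adding two distances raises the index by at most one: the new metric is an ultrametric up to an
additive constant `1`. Such a metric is hyperbolic, and Gromov products tend to infinity as soon as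
both points go to infinity, so there is only one boundary point.
-/

open Filter

section QuasiUltrametric

variable {X : Type*} {d : X → X → ℝ} {C : ℝ}

/-- The ultrametric inequality up to an additive error `C`. No other metric axiom is included. -/
def IsQuasiUltrametric (d : X → X → ℝ) (C : ℝ) : Prop :=
  ∀ x y z, d x z ≤ max (d x y) (d y z) + C

namespace IsQuasiUltrametric

lemma isMetricOn (h : IsQuasiUltrametric d C) (hC : 0 < C) (hself : ∀ x, d x x = 0)
    (hsymm : ∀ x y, d x y = d y x) (hsep : ∀ x y, x ≠ y → C ≤ d x y) : IsMetricOn d where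
  refl := hself
  eq_of_eq_zero x y hxy := by
    by_contra hne
    exact (hC.trans_le (hsep x y hne)).ne' hxy
  symm := hsymm
  triangle x y z := by
    rcases eq_or_ne x y with rfl | hxy
    · rw [hself, zero_add]
    rcases eq_or_ne y z with rfl | hyz
    · rw [hself, add_zero]
    calc d x z ≤ max (d x y) (d y z) + C := h x y z
      _ ≤ max (d x y) (d y z) + min (d x y) (d y z) := by
        gcongr
        exact le_min (hsep x y hxy) (hsep y z hyz)
      _ = d x y + d y z := max_add_min _ _

lemma four_point (h : IsQuasiUltrametric d C) (hsymm : ∀ x y, d x y = d y x) (w x y z : X) :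
    d x z + d y w ≤ max (d x y + d z w) (d y z + d x w) + 2 * C := by
  have hxz_y : d x z - C ≤ max (d x y) (d y z) := sub_le_iff_le_add.2 (h x y z)
  have hxz_w : d x z - C ≤ max (d x w) (d z w) :=
    sub_le_iff_le_add.2 (hsymm w z ▸ h x w z)
  have hyw_x : d y w - C ≤ max (d x y) (d x w) :=
    sub_le_iff_le_add.2 (hsymm y x ▸ h y x w)
  have hyw_z : d y w - C ≤ max (d y z) (d z w) := sub_le_iff_le_add.2 (h y z w)
  rw [← sub_le_iff_le_add, le_max_iff]
  rw [le_max_iff] at hxz_y hxz_w hyw_x hyw_z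
  by_contra! hlt
  obtain ⟨hlt_xy_zw, hlt_yz_xw⟩ := hlt
  -- Either the two diagonals are bounded by two opposite sides, or each side bounds one of the
  -- diagonals and averaging the four bounds gives the claim.
  rcases hxz_y with hxz_y | hxz_y <;> rcases hxz_w with hxz_w | hxz_w <;>
    rcases hyw_x with hyw_x | hyw_x <;> rcases hyw_z with hyw_z | hyw_z <;> linarith

lemma min_gromovProd_sub_le (h : IsQuasiUltrametric d C) (hsymm : ∀ x y, d x y = d y x)
    (x₀ x y z : X) :
    min (gromovProd d x₀ x y) (gromovProd d x₀ y z) - C ≤ gromovProd d x₀ x z := by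
  unfold gromovProd
  rw [sub_le_iff_le_add, min_le_iff]
  rcases le_max_iff.1 (sub_le_iff_le_add.2 (h.four_point hsymm x₀ x y z)) with hle | hle
  · left
    linarith
  · right
    linarith

lemma min_sub_div_two_le_gromovProd (h : IsQuasiUltrametric d C)
    (hsymm : ∀ x y, d x y = d y x) (x₀ x y : X) :
    (min (d x x₀) (d y x₀) - C) / 2 ≤ gromovProd d x₀ x y := by
  have hxy : d x y ≤ max (d x x₀) (d y x₀) + C := hsymm x₀ y ▸ h x x₀ y
  unfold gromovProd
  linarith [min_add_max (d x x₀) (d y x₀)]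

lemma tendsto_gromovProd {ι : Type*} {l : Filter ι} {u v : ι → X} {x₀ : X}
    (h : IsQuasiUltrametric d C) (hsymm : ∀ x y, d x y = d y x)
    (hu : Tendsto (fun i => d (u i) x₀) l atTop) (hv : Tendsto (fun i => d (v i) x₀) l atTop) :
    Tendsto (fun i => gromovProd d x₀ (u i) (v i)) l atTop := by
  refine tendsto_atTop.2 fun b => ?_
  filter_upwards [hu.eventually_ge_atTop (2 * b + C), hv.eventually_ge_atTop (2 * b + C)]
    with i hui hvi
  linarith [h.min_sub_div_two_le_gromovProd hsymm x₀ (u i) (v i), le_min hui hvi]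

end IsQuasiUltrametric

lemma tendsto_atTop_of_tendsto_gromovProd {ι : Type*} [Preorder ι] {u : ι → X} {x₀ : X}
    (hself : ∀ x, d x x = 0)
    (hu : Tendsto (fun p : ι × ι => gromovProd d x₀ (u p.1) (u p.2)) atTop atTop) :
    Tendsto (fun i => d (u i) x₀) atTop atTop := by
  refine (hu.comp tendsto_atTop_diagonal).congr fun i => ?_
  simp [gromovProd, hself]

end QuasiUltrametric

section ColoredCover

variable {X : Type*} {d : X → X → ℝ} {n : ℕ} {r D : ℝ}

/-- `X` is covered by `n + 1` families, each `r`-disjoint, of sets of diameter at most `D`. This is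
the clause shared by the definitions of asymptotic and Nagata-Assouad dimension. -/
def HasColoredCover (d : X → X → ℝ) (n : ℕ) (r D : ℝ) : Prop :=
  ∃ U : Fin (n + 1) → Set (Set X),
    (∀ x : X, ∃ i, ∃ V ∈ U i, x ∈ V) ∧
    (∀ i, ∀ V ∈ U i, ∀ W ∈ U i, V ≠ W → ∀ x ∈ V, ∀ y ∈ W, r < d x y) ∧
    (∀ i, ∀ V ∈ U i, ∀ x ∈ V, ∀ y ∈ V, d x y ≤ D)

lemma HasColoredCover.imp {d' : X → X → ℝ} {r' D' : ℝ} (h : HasColoredCover d n r D)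
    (hr : ∀ x y, r < d x y → r' < d' x y) (hD : ∀ x y, d x y ≤ D → d' x y ≤ D') :
    HasColoredCover d' n r' D' := by
  obtain ⟨U, hcover, hdisjoint, hbounded⟩ := h
  exact ⟨U, hcover,
    fun i V hV W hW hVW x hx y hy => hr x y (hdisjoint i V hV W hW hVW x hx y hy),
    fun i V hV x hx y hy => hD x y (hbounded i V hV x hx y hy)⟩

lemma hasColoredCover_of_forall_ne_lt (hr : ∀ x y, x ≠ y → r < d x y)
    (hD : ∀ x, d x x ≤ D) : HasColoredCover d n r D := by
  refine ⟨fun _ => Set.range ({·}), fun x => ⟨0, {x}, ⟨x, rfl⟩, rfl⟩, ?_, ?_⟩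
  · rintro _ _ ⟨x, rfl⟩ _ ⟨y, rfl⟩ hxy _ rfl _ rfl
    exact hr _ _ (ne_of_apply_ne _ hxy)
  · rintro _ _ ⟨x, rfl⟩ _ rfl _ rfl
    exact hD _

/-- A sequence of scales for a control function `D` of covers: it at least doubles at each step, and
covers whose disjointness is one scale have diameters bounded by the next. -/
noncomputable def controlScale (D : ℝ → ℝ) : ℕ → ℝ
  | 0 => 1
  | k + 1 => max (2 * controlScale D k) (D (controlScale D k))

lemma two_mul_controlScale_le (D : ℝ → ℝ) (k : ℕ) :
    2 * controlScale D k ≤ controlScale D (k + 1) :=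
  le_max_left _ _

lemma controlScale_pos (D : ℝ → ℝ) (k : ℕ) : 0 < controlScale D k := by
  induction k with
  | zero => exact one_pos
  | succ k ih => exact (mul_pos two_pos ih).trans_le (two_mul_controlScale_le D k)

lemma AsdimWithLE.exists_scale (h : AsdimWithLE d n) :
    ∃ g : ℕ → ℝ, (∀ k, 0 < g k) ∧ (∀ k, 2 * g k ≤ g (k + 1)) ∧
      ∀ k, HasColoredCover d n (g k) (g (k + 1)) := by
  have hcover : ∀ r, 0 < r → ∃ D, HasColoredCover d n r D := fun r hr =>
    let ⟨D, _, hD⟩ := h r hr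
    ⟨D, hD⟩
  choose! D hD using hcover
  exact ⟨controlScale D, controlScale_pos D, two_mul_controlScale_le D, fun k =>
    (hD _ (controlScale_pos D k)).imp (fun _ _ => id) fun _ _ hle => hle.trans (le_max_right _ _)⟩

end ColoredCover

section ScaleIndex

lemma exists_galoisConnection_of_tendsto_atTop {α : Type*} [Preorder α] {g : ℕ → α}
    (hmono : Monotone g) (hlim : Tendsto g atTop atTop) : ∃ N : α → ℕ, GaloisConnection N g := by
  refine ⟨fun t => sInf {k | t ≤ g k}, fun t k => ⟨fun hk => ?_, fun ht => Nat.sInf_le ht⟩⟩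
  have hmem : t ≤ g (sInf {k | t ≤ g k}) := Nat.sInf_mem (hlim.eventually_ge_atTop t).exists
  exact hmem.trans (hmono hk)

lemma tendsto_atTop_of_galoisConnection {α β : Type*} [LinearOrder α] [NoMaxOrder α] [LinearOrder β]
    {l : α → β} {u : β → α} (gc : GaloisConnection l u) : Tendsto l atTop atTop := by
  refine tendsto_atTop.2 fun b => ?_
  filter_upwards [eventually_gt_atTop (u b)] with a ha
  exact (gc.lt_iff_lt.2 ha).le

lemma map_add_le_max_add_one {N : ℝ → ℕ} {g : ℕ → ℝ} (gc : GaloisConnection N g)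
    (hdouble : ∀ k, 2 * g k ≤ g (k + 1)) (s t : ℝ) : N (s + t) ≤ max (N s) (N t) + 1 := by
  set k := max (N s) (N t)
  have hs : s ≤ g k := gc.le_iff_le.1 (le_max_left _ _)
  have ht : t ≤ g k := gc.le_iff_le.1 (le_max_right _ _)
  refine gc.le_iff_le.2 ?_
  calc s + t ≤ 2 * g k := by linarith
    _ ≤ g (k + 1) := hdouble k

end ScaleIndex

section ScaleDist

variable {X : Type*} {N : ℝ → ℕ} {g : ℕ → ℝ} {n : ℕ}

section Dist

variable [Dist X]

open Classical in
/-- The distance function `N ∘ dist`, with `1` added off the diagonal so that distinct points are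
separated. In the construction `N t` is the index of the first scale that is at least `t`. -/
noncomputable def scaleDist (N : ℝ → ℕ) (x y : X) : ℝ :=
  if x = y then 0 else N (dist x y) + 1

lemma scaleDist_self (N : ℝ → ℕ) (x : X) : scaleDist N x x = 0 :=
  if_pos rfl

lemma scaleDist_of_ne (N : ℝ → ℕ) {x y : X} (hxy : x ≠ y) :
    scaleDist N x y = N (dist x y) + 1 :=
  if_neg hxy

lemma one_le_scaleDist (N : ℝ → ℕ) {x y : X} (hxy : x ≠ y) : 1 ≤ scaleDist N x y := by
  rw [scaleDist_of_ne N hxy]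
  exact le_add_of_nonneg_left (Nat.cast_nonneg _)

lemma scaleDist_nonneg (N : ℝ → ℕ) (x y : X) : 0 ≤ scaleDist N x y := by
  rcases eq_or_ne x y with rfl | hxy
  · exact (scaleDist_self N x).ge
  · exact zero_le_one.trans (one_le_scaleDist N hxy)

end Dist

variable [PseudoMetricSpace X]

lemma scaleDist_comm (N : ℝ → ℕ) (x y : X) : scaleDist N x y = scaleDist N y x := by
  rcases eq_or_ne x y with rfl | hxy
  · rfl
  · rw [scaleDist_of_ne N hxy, scaleDist_of_ne N hxy.symm, dist_comm]

lemma scaleDist_le_add_one_iff (gc : GaloisConnection N g) {k : ℕ} (hk : 0 ≤ g k) {x y : X} :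
    scaleDist N x y ≤ k + 1 ↔ dist x y ≤ g k := by
  rcases eq_or_ne x y with rfl | hxy
  · rw [scaleDist_self, dist_self]
    exact iff_of_true (by positivity) hk
  · rw [scaleDist_of_ne N hxy, add_le_add_iff_right, Nat.cast_le, gc.le_iff_le]

lemma isQuasiUltrametric_scaleDist (hmono : Monotone N)
    (hadd : ∀ s t, N (s + t) ≤ max (N s) (N t) + 1) :
    IsQuasiUltrametric (scaleDist N : X → X → ℝ) 1 := by
  intro x y z
  rcases eq_or_ne x z with rfl | hxz
  · rw [scaleDist_self]
    exact add_nonneg (le_max_of_le_left (scaleDist_nonneg N x y)) zero_le_one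
  rcases eq_or_ne x y with rfl | hxy
  · exact le_add_of_le_of_nonneg (le_max_right _ _) zero_le_one
  rcases eq_or_ne y z with rfl | hyz
  · exact le_add_of_le_of_nonneg (le_max_left _ _) zero_le_one
  have hN : N (dist x z) ≤ max (N (dist x y)) (N (dist y z)) + 1 :=
    (hmono (dist_triangle x y z)).trans (hadd _ _)
  rw [scaleDist_of_ne N hxz, scaleDist_of_ne N hxy, scaleDist_of_ne N hyz, max_add_add_right]
  exact_mod_cast Nat.add_le_add_right hN 1

lemma isMetricOn_scaleDist (hmono : Monotone N)
    (hadd : ∀ s t, N (s + t) ≤ max (N s) (N t) + 1) :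
    IsMetricOn (scaleDist N : X → X → ℝ) :=
  (isQuasiUltrametric_scaleDist hmono hadd).isMetricOn one_pos (scaleDist_self N)
    (scaleDist_comm N) fun _ _ => one_le_scaleDist N

lemma coarselyEquivalent_scaleDist (hmono : Monotone N) (hlim : Tendsto N atTop atTop) :
    CoarselyEquivalent (fun x y : X => dist x y) (scaleDist N) := by
  have hcast : Monotone fun t => (N t : ℝ) := Nat.mono_cast.comp hmono
  have hcast_lim : Tendsto (fun t => (N t : ℝ)) atTop atTop := tendsto_natCast_atTop_atTop.comp hlim
  refine ⟨fun t => N t - N 0, fun t => N t + 1, fun _ _ hst => sub_le_sub_right (hcast hst) _,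
    hcast.add_const 1, tendsto_atTop_add_const_right _ _ hcast_lim, fun x y => ?_⟩
  rcases eq_or_ne x y with rfl | hxy
  · simp only [scaleDist_self, dist_self, sub_self]
    exact ⟨le_rfl, by positivity⟩
  · rw [scaleDist_of_ne N hxy]
    exact ⟨by linarith [Nat.cast_nonneg (α := ℝ) (N 0)], le_rfl⟩

lemma nagataDimWithLE_scaleDist (gc : GaloisConnection N g) (hg : ∀ k, 0 ≤ g k)
    (hcover : ∀ k, HasColoredCover (fun x y : X => dist x y) n (g k) (g (k + 1))) :
    NagataDimWithLE (scaleDist N : X → X → ℝ) n := by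
  refine ⟨3, three_pos, fun r hr => ?_⟩
  rcases lt_or_ge r 1 with hr1 | hr1
  · exact hasColoredCover_of_forall_ne_lt (fun _ _ hxy => hr1.trans_le (one_le_scaleDist N hxy))
      fun x => (scaleDist_self N x).trans_le (by positivity)
  · set k := ⌊r⌋₊
    have hkr : (k : ℝ) ≤ r := Nat.floor_le hr.le
    have hrk : r < k + 1 := Nat.lt_floor_add_one r
    refine (hcover k).imp (fun x y hxy => ?_) fun x y hxy => ?_
    · have hlt : k + 1 < scaleDist N x y :=
        (lt_iff_lt_of_le_iff_le (scaleDist_le_add_one_iff gc (hg k))).2 hxy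
      exact hrk.trans hlt
    · have hle : scaleDist N x y ≤ (k + 1 : ℕ) + 1 :=
        (scaleDist_le_add_one_iff gc (hg (k + 1))).2 hxy
      push_cast at hle
      linarith

end ScaleDist

theorem exists_hyperbolic_metric_of_asdim_general
    {X : Type*} [PseudoMetricSpace X] {n : ℕ} (h : AsdimWithLE (fun x y : X => dist x y) n) :
    ∃ dh : X → X → ℝ, IsMetricOn dh ∧
      CoarselyEquivalent (fun x y : X => dist x y) dh ∧
      NagataDimWithLE dh n ∧
      (∀ x₀ x y z : X,
        min (gromovProd dh x₀ x y) (gromovProd dh x₀ y z) - 1 ≤ gromovProd dh x₀ x z) ∧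
      (∀ x₀ : X, ∀ u v : ℕ → X,
        Tendsto (fun p : ℕ × ℕ => gromovProd dh x₀ (u p.1) (u p.2)) atTop atTop →
        Tendsto (fun p : ℕ × ℕ => gromovProd dh x₀ (v p.1) (v p.2)) atTop atTop →
        Tendsto (fun m : ℕ => gromovProd dh x₀ (u m) (v m)) atTop atTop) := by
  obtain ⟨g, hpos, hdouble, hcover⟩ := h.exists_scale
  have hmono : Monotone g := monotone_nat_of_le_succ fun k => by linarith [hpos k, hdouble k]
  have hlim : Tendsto g atTop atTop := tendsto_atTop_of_geom_le (hpos 0) one_lt_two hdouble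
  obtain ⟨N, gc⟩ := exists_galoisConnection_of_tendsto_atTop hmono hlim
  have hadd := map_add_le_max_add_one gc hdouble
  have hultra := isQuasiUltrametric_scaleDist (X := X) gc.monotone_l hadd
  refine ⟨scaleDist N, isMetricOn_scaleDist gc.monotone_l hadd,
    coarselyEquivalent_scaleDist gc.monotone_l (tendsto_atTop_of_galoisConnection gc),
    nagataDimWithLE_scaleDist gc (fun k => (hpos k).le) hcover,
    hultra.min_gromovProd_sub_le (scaleDist_comm N), fun x₀ u v hu hv => ?_⟩
  exact hultra.tendsto_gromovProd (scaleDist_comm N)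
    (tendsto_atTop_of_tendsto_gromovProd (scaleDist_self N) hu)
    (tendsto_atTop_of_tendsto_gromovProd (scaleDist_self N) hv)

theorem exists_hyperbolic_metric_of_asdim
    {X : Type*} [MetricSpace X] (hX : ¬ Bornology.IsBounded (Set.univ : Set X)) (n : ℕ)
    (h : AsdimWithLE (fun x y : X => dist x y) n) :
    ∃ dh : X → X → ℝ, IsMetricOn dh ∧
      CoarselyEquivalent (fun x y : X => dist x y) dh ∧
      NagataDimWithLE dh n ∧
      (∀ x₀ x y z : X,
        min (gromovProd dh x₀ x y) (gromovProd dh x₀ y z) - 4 ≤ gromovProd dh x₀ x z) ∧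
      (∀ x₀ : X, ∀ u v : ℕ → X,
        Filter.Tendsto (fun p : ℕ × ℕ => gromovProd dh x₀ (u p.1) (u p.2))
          Filter.atTop Filter.atTop →
        Filter.Tendsto (fun p : ℕ × ℕ => gromovProd dh x₀ (v p.1) (v p.2))
          Filter.atTop Filter.atTop →
        Filter.Tendsto (fun m : ℕ => gromovProd dh x₀ (u m) (v m))
          Filter.atTop Filter.atTop) := by
  obtain ⟨dh, hmetric, hcoarse, hdim, hgromov, hboundary⟩ :=
    exists_hyperbolic_metric_of_asdim_general h
  exact ⟨dh, hmetric, hcoarse, hdim, fun x₀ x y z => by linarith [hgromov x₀ x y z], hboundary⟩
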